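/- arXiv:1512.06973 — 3 statements merged into one kernel-verified Lean document; each statement's English description precedes it below -/
import Mathlib

section
/- Theorem A.2 (traction of the fundamental tensor). In the setting of the fundamental-type tensor E built from Helmholtz solutions γ_s, γ_p, for every vector n ∈ ℝ² and every point of U: T_n E = −n (∇R)^T + ((n·∇)γ_s) I + M_n[2μ E − γ_s I]. Here T_n is applied columnwise to E, i.e., (T_n E)_{·j} = (λ+μ) n (Σ_i ∂_i E_{ij}) + μ (n·∇)E_{·j} + μ (M_n E)_{·j} + μ (M_n E)_{·j} written compactly as T_n acting on each column, and M_n applied to a matrix field F has entries (M_n F)_{ij} = Σ_{l=1}^{2} (n_l ∂_i − n_i ∂_l) F_{lj}; in particular (M_n (f I))_{ij} = n_j ∂_i f − n_i ∂_j f for a scalar field f. -/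
noncomputable section

/-- Points/vectors in the plane. -/
abbrev V2 : Type := Fin 2 → ℝ

/-- Complex 2-vectors. -/
abbrev C2 : Type := Fin 2 → ℂ

/-- The rotation-by-π/2 matrix A = [[0,-1],[1,0]] (real entries). -/
def Arot : Matrix (Fin 2) (Fin 2) ℝ := !![0, -1; 1, 0]

/-- The rotation-by-π/2 matrix A = [[0,-1],[1,0]] (complex entries). -/
def ArotC : Matrix (Fin 2) (Fin 2) ℂ := !![0, -1; 1, 0]

/-- `pd i f x` is the `i`-th partial derivative of `f : ℝ² → ℂ` at `x`. -/
def pd (i : Fin 2) (f : V2 → ℂ) (x : V2) : ℂ :=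
  fderiv ℝ f x (Pi.single i 1)

/-- Directional derivative `(v·∇)f` of a scalar field along the real vector `v`. -/
def dirD (v : V2) (f : V2 → ℂ) (x : V2) : ℂ :=
  (v 0 : ℂ) * pd 0 f x + (v 1 : ℂ) * pd 1 f x


/-- The Hessian matrix of a scalar field. -/
def hess (f : V2 → ℂ) (y : V2) : Matrix (Fin 2) (Fin 2) ℂ :=
  Matrix.of fun i j => pd i (pd j f) y

/-- The fundamental-type tensor `E = (1/μ)γ_s I + (1/(ρω²)) Hess(γ_s − γ_p)`. -/
def Emat (mu rho om : ℝ) (γs γp : V2 → ℂ) (y : V2) : Matrix (Fin 2) (Fin 2) ℂ :=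
  ((mu : ℂ)⁻¹ * γs y) • (1 : Matrix (Fin 2) (Fin 2) ℂ)
    + (((rho * om ^ 2 : ℝ) : ℂ))⁻¹ • hess (fun w => γs w - γp w) y

/-- The traction operator applied columnwise to a matrix field:
`(T_n F)_{·j} = λ(Σ_i ∂_i F_{ij}) n + 2μ (n·∇)F_{·j} + μ(∂₁F_{2j} − ∂₂F_{1j})(n₂, −n₁)`. -/
def tracM (lam mu : ℝ) (n : V2) (F : V2 → Matrix (Fin 2) (Fin 2) ℂ) (x : V2) :
    Matrix (Fin 2) (Fin 2) ℂ :=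
  Matrix.of fun i j =>
    (lam : ℂ) * (∑ l : Fin 2, pd l (fun y => F y l j) x) * (n i : ℂ)
      + 2 * (mu : ℂ) * ((n 0 : ℂ) * pd 0 (fun y => F y i j) x
          + (n 1 : ℂ) * pd 1 (fun y => F y i j) x)
      + (mu : ℂ) * (pd 0 (fun y => F y 1 j) x - pd 1 (fun y => F y 0 j) x)
          * ((![n 1, -n 0] : V2) i : ℂ)

/-- The Günter derivative applied to a matrix field:
`(M_n F)_{ij} = Σ_l (n_l ∂_i − n_i ∂_l) F_{lj}`. -/
def gunterM (n : V2) (F : V2 → Matrix (Fin 2) (Fin 2) ℂ) (x : V2) :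
    Matrix (Fin 2) (Fin 2) ℂ :=
  Matrix.of fun i j =>
    ∑ l : Fin 2, ((n l : ℂ) * pd i (fun y => F y l j) x - (n i : ℂ) * pd l (fun y => F y l j) x)

theorem pd_congr {U : Set V2} (hU : IsOpen U) {f g : V2 → ℂ} (h : ∀ y ∈ U, f y = g y)
    {x : V2} (hx : x ∈ U) (i : Fin 2) : pd i f x = pd i g x := by
  unfold pd
  have : f =ᶠ[nhds x] g := Filter.eventually_of_mem (hU.mem_nhds hx) h
  rw [this.fderiv_eq]

theorem pd_contDiffOn {U : Set V2} (hU : IsOpen U) {f : V2 → ℂ} {m k : WithTop ℕ∞}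
    (hf : ContDiffOn ℝ m f U) (hk : k + 1 ≤ m) (i : Fin 2) : ContDiffOn ℝ k (pd i f) U := by
  unfold pd
  exact (hf.fderiv_of_isOpen hU hk).clm_apply contDiffOn_const

theorem pd_comm {U : Set V2} (hU : IsOpen U) {f : V2 → ℂ}
    (hf : ContDiffOn ℝ 2 f U) {x : V2} (hx : x ∈ U) (i j : Fin 2) :
    pd i (pd j f) x = pd j (pd i f) x := by
  have hs : IsSymmSndFDerivAt ℝ f x :=
    (hf.contDiffAt (hU.mem_nhds hx)).isSymmSndFDerivAt (by simp)
  have hd : DifferentiableAt ℝ (fderiv ℝ f) x :=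
    ((hf.fderiv_of_isOpen (m := 1) hU (by norm_num)).contDiffAt
      (hU.mem_nhds hx)).differentiableAt (by norm_num)
  have key : ∀ a b : Fin 2, pd a (pd b f) x
      = fderiv ℝ (fderiv ℝ f) x (Pi.single a 1) (Pi.single b 1) := by
    intro a b
    unfold pd
    rw [fderiv_clm_apply hd (differentiableAt_const _)]
    simp
  rw [key, key]
  exact hs _ _

theorem pd_lin (a b : ℂ) {f g : V2 → ℂ} {x : V2} (hf : DifferentiableAt ℝ f x)
    (hg : DifferentiableAt ℝ g x) (i : Fin 2) :
    pd i (fun y => a * f y + b * g y) x = a * pd i f x + b * pd i g x := by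
  unfold pd
  rw [fderiv_fun_add (hf.const_mul a) (hg.const_mul b), fderiv_const_mul hf, fderiv_const_mul hg]
  simp

/-- Theorem A.2 (traction of the fundamental tensor):
`T_n E = −n (∇R)^T + ((n·∇)γ_s) I + M_n[2μ E − γ_s I]` on `U`. -/
theorem traction_of_fundamental_tensor (lam mu rho om ks kp : ℝ)
    (hmu : 0 < mu) (hlm : 0 < lam + mu) (hrho : 0 < rho) (hom : 0 < om)
    (hks : ks = om * Real.sqrt (rho / mu)) (hkp : kp = om * Real.sqrt (rho / (lam + 2 * mu)))
    (U : Set V2) (hU : IsOpen U) (γs γp : V2 → ℂ)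
    (hγs : ContDiffOn ℝ 3 γs U) (hγp : ContDiffOn ℝ 3 γp U)
    (hHs : ∀ y ∈ U, pd 0 (pd 0 γs) y + pd 1 (pd 1 γs) y + (ks : ℂ) ^ 2 * γs y = 0)
    (hHp : ∀ y ∈ U, pd 0 (pd 0 γp) y + pd 1 (pd 1 γp) y + (kp : ℂ) ^ 2 * γp y = 0) :
    ∀ x ∈ U, ∀ (n : V2), ∀ i j : Fin 2,
      tracM lam mu n (Emat mu rho om γs γp) x i j
        = -(n i : ℂ) * pd j (fun w => γs w - γp w) x
          + (if i = j then (n 0 : ℂ) * pd 0 γs x + (n 1 : ℂ) * pd 1 γs x else 0)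
          + gunterM n (fun y => (2 * (mu : ℂ)) • Emat mu rho om γs γp y
              - γs y • (1 : Matrix (Fin 2) (Fin 2) ℂ)) x i j := by
  intro x hx n i j
  set R : V2 → ℂ := fun w => γs w - γp w with hRdef
  have hR : ContDiffOn ℝ 3 R U := hγs.sub hγp
  have h1 : ∀ f : V2 → ℂ, ContDiffOn ℝ 3 f U → ∀ j, ContDiffOn ℝ 2 (pd j f) U :=
    fun f hf j => pd_contDiffOn hU hf (by norm_num) j
  have h2 : ∀ f : V2 → ℂ, ContDiffOn ℝ 3 f U → ∀ i j, ContDiffOn ℝ 1 (pd i (pd j f)) U :=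
    fun f hf i j => pd_contDiffOn hU (h1 f hf j) (by norm_num) i
  have d0 : ∀ f : V2 → ℂ, ContDiffOn ℝ 3 f U → ∀ y ∈ U, DifferentiableAt ℝ f y :=
    fun f hf y hy => (hf.contDiffAt (hU.mem_nhds hy)).differentiableAt (by norm_num)
  have d1 : ∀ f : V2 → ℂ, ContDiffOn ℝ 3 f U → ∀ j, ∀ y ∈ U, DifferentiableAt ℝ (pd j f) y :=
    fun f hf j y hy => ((h1 f hf j).contDiffAt (hU.mem_nhds hy)).differentiableAt (by norm_num)
  have d2 : ∀ f : V2 → ℂ, ContDiffOn ℝ 3 f U → ∀ i j, ∀ y ∈ U,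
      DifferentiableAt ℝ (pd i (pd j f)) y :=
    fun f hf i j y hy =>
      ((h2 f hf i j).contDiffAt (hU.mem_nhds hy)).differentiableAt (by norm_num)
  -- derivatives of R
  have r1 : ∀ i, ∀ y ∈ U, pd i R y = 1 * pd i γs y + (-1) * pd i γp y := by
    intro i y hy
    rw [← pd_lin 1 (-1) (d0 _ hγs y hy) (d0 _ hγp y hy)]
    refine congrArg (fun f => pd i f y) ?_
    funext w; simp [hRdef]; ring
  have r2 : ∀ i j, ∀ y ∈ U, pd i (pd j R) y
      = 1 * pd i (pd j γs) y + (-1) * pd i (pd j γp) y := by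
    intro i j y hy
    rw [pd_congr hU (r1 j) hy, pd_lin 1 (-1) (d1 _ hγs j y hy) (d1 _ hγp j y hy)]
  have lap : ∀ y ∈ U, 1 * pd 0 (pd 0 R) y + 1 * pd 1 (pd 1 R) y
      = (-(ks : ℂ) ^ 2) * γs y + (kp : ℂ) ^ 2 * γp y := by
    intro y hy
    rw [r2 0 0 y hy, r2 1 1 y hy]
    linear_combination hHs y hy - hHp y hy
  have lap1 : ∀ j, pd j (pd 0 (pd 0 R)) x + pd j (pd 1 (pd 1 R)) x
      = (-(ks : ℂ) ^ 2) * pd j γs x + (kp : ℂ) ^ 2 * pd j γp x := by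
    intro j
    have := pd_congr hU lap hx j
    rw [pd_lin 1 1 (d2 _ hR 0 0 x hx) (d2 _ hR 1 1 x hx),
      pd_lin _ _ (d0 _ hγs x hx) (d0 _ hγp x hx)] at this
    simpa using this
  have s12 : ∀ k i j, pd k (pd i (pd j R)) x = pd i (pd k (pd j R)) x :=
    fun k i j => pd_comm hU (h1 R hR j) hx k i
  have s23 : ∀ k i j, pd k (pd i (pd j R)) x = pd k (pd j (pd i R)) x :=
    fun k i j => pd_congr hU (fun y hy => pd_comm hU (hR.of_le (by norm_num)) hy i j) hx k
  set c : ℂ := (((rho * om ^ 2 : ℝ) : ℂ))⁻¹ with hc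
  set δ : Fin 2 → Fin 2 → ℂ := fun i j => if i = j then 1 else 0 with hδ
  have e1 : ∀ k i j, pd k (fun y => Emat mu rho om γs γp y i j) x
      = ((mu : ℂ)⁻¹ * δ i j) * pd k γs x + c * pd k (pd i (pd j R)) x := by
    intro k i j
    rw [← pd_lin _ _ (d0 _ hγs x hx) (d2 _ hR i j x hx)]
    refine congrArg (fun f => pd k f x) ?_
    funext w
    simp [Emat, hess, Matrix.one_apply, hδ, hc, hRdef]
    try split_ifs <;> ring
  have e2 : ∀ k i j, pd k (fun y => ((2 * (mu : ℂ)) • Emat mu rho om γs γp y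
              - γs y • (1 : Matrix (Fin 2) (Fin 2) ℂ)) i j) x
      = (2 * (mu : ℂ) * ((mu : ℂ)⁻¹ * δ i j) - δ i j) * pd k γs x
        + (2 * (mu : ℂ) * c) * pd k (pd i (pd j R)) x := by
    intro k i j
    rw [← pd_lin _ _ (d0 _ hγs x hx) (d2 _ hR i j x hx)]
    refine congrArg (fun f => pd k f x) ?_
    funext w
    simp only [Emat, hess, Matrix.one_apply, Matrix.sub_apply, Matrix.smul_apply,
      Matrix.add_apply, Matrix.of_apply, smul_eq_mul, hδ, hc, hRdef]
    ring
  have hmu0 : (mu : ℂ) ≠ 0 := by exact_mod_cast hmu.ne'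
  have hl : 0 < lam + 2 * mu := by linarith
  have hl0 : (lam : ℂ) + 2 * mu ≠ 0 := by exact_mod_cast hl.ne'
  have cks : (mu : ℂ) * (c * (ks : ℂ) ^ 2) = 1 := by
    have h : mu * ((rho * om ^ 2)⁻¹ * ks ^ 2) = 1 := by
      rw [hks, mul_pow, Real.sq_sqrt (by positivity)]; field_simp
    rw [hc]; exact_mod_cast h
  have ckp : ((lam : ℂ) + 2 * mu) * (c * (kp : ℂ) ^ 2) = 1 := by
    have h : (lam + 2 * mu) * ((rho * om ^ 2)⁻¹ * kp ^ 2) = 1 := by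
      rw [hkp, mul_pow, Real.sq_sqrt (by positivity)]; field_simp
    rw [hc]; exact_mod_cast h
  have hmi : (mu : ℂ) * (mu : ℂ)⁻¹ = 1 := mul_inv_cancel₀ hmu0
  have cks' : c * (ks : ℂ) ^ 2 = (mu : ℂ)⁻¹ := by
    field_simp; linear_combination cks
  have l0 := lap1 0
  have l1 := lap1 1
  have q1 := s12 1 0 0
  have q2 := s23 0 1 0
  have q3 := s12 1 0 1
  have q4 := s23 1 1 0
  simp only [tracM, gunterM, Matrix.of_apply, Fin.sum_univ_two, e1, e2]
  rw [r1 j x hx]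
  generalize (mu : ℂ)⁻¹ = m at *
  rw [q2] at q1

  have D0 : m * pd 0 γs x + c * (pd 0 (pd 0 (pd 0 R)) x + pd 0 (pd 1 (pd 1 R)) x)
      = c * (kp : ℂ) ^ 2 * pd 0 γp x := by
    linear_combination c * l0 - pd 0 γs x * cks'
  have D1 : m * pd 1 γs x + c * (pd 0 (pd 0 (pd 1 R)) x + pd 1 (pd 1 (pd 1 R)) x)
      = c * (kp : ℂ) ^ 2 * pd 1 γp x := by
    linear_combination c * l1 - pd 1 γs x * cks' - c * q1
  have q5 := q4.trans q3
  have f01 : ((0 : Fin 2) = 1) = False := by simp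
  have f10 : ((1 : Fin 2) = 0) = False := by simp
  have hv0 : (![n 1, -n 0] : V2) 0 = n 1 := rfl
  have hv1 : (![n 1, -n 0] : V2) 1 = -n 0 := rfl
  have fin : ∀ i : Fin 2, i = 0 ∨ i = 1 := by decide
  rcases fin i with rfl | rfl <;> rcases fin j with rfl | rfl <;>
    simp only [hδ, f01, f10, hv0, hv1, if_true, if_false, q1, q2, q3, q5, Complex.ofReal_neg]
  · linear_combination ((lam : ℂ) + 2 * mu) * n 0 * D0 + n 0 * pd 0 γp x * ckp
      + n 1 * pd 1 γs x * hmi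
  · linear_combination ((lam : ℂ) + 2 * mu) * n 0 * D1 + n 0 * pd 1 γp x * ckp
      - n 1 * pd 0 γs x * hmi
  · linear_combination ((lam : ℂ) + 2 * mu) * n 1 * D0 + n 1 * pd 0 γp x * ckp
      - n 0 * pd 1 γs x * hmi
  · linear_combination ((lam : ℂ) + 2 * mu) * n 1 * D1 + n 1 * pd 1 γp x * ckp
      + n 0 * pd 0 γs x * hmi

end
end

section
/- Antisymmetrized Günter identity for the kernel R (pointwise identity underlying the g₁-term of the W_s regularization). In the setting of the fundamental-type tensor E built from Helmholtz solutions γ_s, γ_p, with H = Hess R, for all vectors m, n ∈ ℝ² and at every point of U: ((ΔR) m − H m) n^T − ((ΔR) n − H n) m^T = μ k_s² (m·(A n)) · A (E − (1/μ) γ_s I), where v w^T denotes the 2×2 outer product of vectors v, w and A = [[0,−1],[1,0]]. -/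
noncomputable section

/-- Symmetry of the mixed second partial derivatives at a point of `C²` regularity. -/
theorem pd_comm_of_contDiffAt (f : V2 → ℂ) (x : V2) (hf : ContDiffAt ℝ 2 f x) (i j : Fin 2) :
    pd i (pd j f) x = pd j (pd i f) x := by
  have hd : DifferentiableAt ℝ (fderiv ℝ f) x :=
    (hf.fderiv_right (m := 1) (by norm_num)).differentiableAt (by norm_num)
  have key : ∀ a b : Fin 2, pd a (pd b f) x
      = fderiv ℝ (fderiv ℝ f) x (Pi.single a 1) (Pi.single b 1) := by
    intro a b
    have h : HasFDerivAt (pd b f)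
        ((fderiv ℝ (fderiv ℝ f) x).flip (Pi.single b 1)) x := by
      have := hd.hasFDerivAt.clm_apply (hasFDerivAt_const (Pi.single b (1 : ℝ) : V2) x)
      rw [ContinuousLinearMap.comp_zero, zero_add] at this
      exact this
    show fderiv ℝ (pd b f) x _ = _
    rw [h.fderiv]
    rfl
  rw [key, key]
  exact (hf.isSymmSndFDerivAt (by simp)) _ _

/-- Antisymmetrized Günter identity for the kernel `R = γ_s − γ_p`: with `H = Hess R`,
`((ΔR) m − H m) n^T − ((ΔR) n − H n) m^T = μ k_s² (m·(A n)) A (E − (1/μ) γ_s I)` on `U`. -/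
theorem antisymmetrized_gunter_identity (lam mu rho om ks kp : ℝ)
    (hmu : 0 < mu) (hlm : 0 < lam + mu) (hrho : 0 < rho) (hom : 0 < om)
    (hks : ks = om * Real.sqrt (rho / mu)) (hkp : kp = om * Real.sqrt (rho / (lam + 2 * mu)))
    (U : Set V2) (hU : IsOpen U) (γs γp : V2 → ℂ)
    (hγs : ContDiffOn ℝ 3 γs U) (hγp : ContDiffOn ℝ 3 γp U)
    (hHs : ∀ y ∈ U, pd 0 (pd 0 γs) y + pd 1 (pd 1 γs) y + (ks : ℂ) ^ 2 * γs y = 0)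
    (hHp : ∀ y ∈ U, pd 0 (pd 0 γp) y + pd 1 (pd 1 γp) y + (kp : ℂ) ^ 2 * γp y = 0) :
    ∀ x ∈ U, ∀ m n : V2,
      Matrix.vecMulVec
          ((pd 0 (pd 0 (fun w => γs w - γp w)) x + pd 1 (pd 1 (fun w => γs w - γp w)) x)
              • (fun i => (m i : ℂ))
            - (hess (fun w => γs w - γp w) x).mulVec (fun i => (m i : ℂ)))
          (fun i => (n i : ℂ))
        - Matrix.vecMulVec
          ((pd 0 (pd 0 (fun w => γs w - γp w)) x + pd 1 (pd 1 (fun w => γs w - γp w)) x)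
              • (fun i => (n i : ℂ))
            - (hess (fun w => γs w - γp w) x).mulVec (fun i => (n i : ℂ)))
          (fun i => (m i : ℂ))
        = ((mu * ks ^ 2 * (m 0 * (Arot.mulVec n) 0 + m 1 * (Arot.mulVec n) 1) : ℝ) : ℂ)
            • (ArotC * (Emat mu rho om γs γp x
                - ((mu : ℂ)⁻¹ * γs x) • (1 : Matrix (Fin 2) (Fin 2) ℂ))) := by
  intro x hx m n
  have hR : ContDiffAt ℝ 2 (fun w => γs w - γp w) x :=
    ((hγs.sub hγp).contDiffAt (hU.mem_nhds hx)).of_le (by norm_num)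
  have hsym := pd_comm_of_contDiffAt _ x hR 1 0
  have hk : mu * ks ^ 2 = rho * om ^ 2 := by
    rw [hks, mul_pow, Real.sq_sqrt (by positivity)]
    field_simp
  have hne : ((rho * om ^ 2 : ℝ) : ℂ) ≠ 0 := by
    exact_mod_cast (by positivity : rho * om ^ 2 ≠ 0)
  have hE : Emat mu rho om γs γp x - ((mu : ℂ)⁻¹ * γs x) • (1 : Matrix (Fin 2) (Fin 2) ℂ)
      = (((rho * om ^ 2 : ℝ) : ℂ))⁻¹ • hess (fun w => γs w - γp w) x := by
    simp [Emat]
  rw [hE, hk, Complex.ofReal_mul (rho * om ^ 2), Matrix.mul_smul, smul_smul, mul_right_comm,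
    mul_inv_cancel₀ hne, one_mul]
  ext i j
  simp only [Matrix.sub_apply, Matrix.vecMulVec_apply, Matrix.smul_apply, Matrix.mul_apply,
    Pi.sub_apply, Pi.smul_apply, smul_eq_mul, Matrix.mulVec, dotProduct, Fin.sum_univ_two, hess,
    Matrix.of_apply]
  fin_cases i <;> fin_cases j <;> simp [Arot, ArotC, hsym] <;> ring

end
end

section
/- Theorem A.3 (regularized representation of the elastic double-layer operator K_s, stated at points off the curve). Let Γ be a simple closed C² curve with L-periodic arclength parametrization z and normal n(s) determined by z'(s) = A n(s). In the setting of the fundamental-type tensor E built from Helmholtz solutions γ_s, γ_p (defined on an open set U ⊆ ℝ²), let u : ℝ → ℂ² be C¹ and L-periodic, and let x ∈ ℝ² be such that x − z(s) ∈ U for all s. For each s, let T_yẼ(z(s)) denote the traction with respect to y, with normal n(s) and Lamé constants (λ, μ), applied columnwise to the matrix field y ↦ E(x − y) at y = z(s). Then ∫₀^L (T_yẼ(z(s)))^T u(s) ds = ∫₀^L (−n(s)·(∇γ_s)(x−z(s))) u(s) ds − ∫₀^L (−(∇R)(x−z(s))) (n(s)·u(s)) ds + ∫₀^L (2μ E(x−z(s))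 − γ_s(x−z(s)) I) A u'(s) ds, where the gradients of γ_s and R are taken in the argument of E and then evaluated at x − z(s) (so that ∇_y γ_s(x−y) = −(∇γ_s)(x−y), etc.). -/
noncomputable section

lemma aux_pd_contDiffOn {U : Set V2} (hU : IsOpen U) {f : V2 → ℂ} {m n : WithTop ℕ∞}
    (hf : ContDiffOn ℝ n f U) (h : m + 1 ≤ n) (i : Fin 2) : ContDiffOn ℝ m (pd i f) U := by
  have := hf.fderiv_of_isOpen hU h
  exact this.clm_apply contDiffOn_const

lemma aux_pd_comp_sub (i : Fin 2) (f : V2 → ℂ) (x y : V2)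
    (hf : DifferentiableAt ℝ f (x - y)) :
    pd i (fun y => f (x - y)) y = - pd i f (x - y) := by
  have h := hf.hasFDerivAt.comp y ((hasFDerivAt_id y).const_sub x)
  have h2 : fderiv ℝ (fun y => f (x - y)) y = _ := h.fderiv
  simp [pd, h2]

lemma aux_fderiv_apply (f : V2 → ℂ) (w v : V2) :
    fderiv ℝ f w v = (v 0 : ℂ) * pd 0 f w + (v 1 : ℂ) * pd 1 f w := by
  have : v = v 0 • (Pi.single 0 1 : V2) + v 1 • (Pi.single 1 1 : V2) := by
    ext i; fin_cases i <;> simp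
  conv_lhs => rw [this]
  simp [pd]

lemma aux_hasDerivAt (f : V2 → ℂ) (x : V2) (z : ℝ → V2) (s : ℝ)
    (hf : DifferentiableAt ℝ f (x - z s)) (hz : DifferentiableAt ℝ z s) :
    HasDerivAt (fun s => f (x - z s))
      (-((deriv z s 0 : ℂ) * pd 0 f (x - z s) + (deriv z s 1 : ℂ) * pd 1 f (x - z s))) s := by
  have h := hf.hasFDerivAt.comp_hasDerivAt s (hz.hasDerivAt.const_sub x)
  rw [map_neg, aux_fderiv_apply] at h
  exact h

lemma aux_pd_comm {U : Set V2} (hU : IsOpen U) {f : V2 → ℂ} (hf : ContDiffOn ℝ 2 f U)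
    {w : V2} (hw : w ∈ U) : pd 0 (pd 1 f) w = pd 1 (pd 0 f) w := by
  have hc : ContDiffAt ℝ 2 f w := hf.contDiffAt (hU.mem_nhds hw)
  have hs : IsSymmSndFDerivAt ℝ f w := hc.isSymmSndFDerivAt (by simp)
  have hd : DifferentiableAt ℝ (fderiv ℝ f) w :=
    (hc.fderiv_right (m := 1) (by norm_num)).differentiableAt (by norm_num)
  have key : ∀ i j : Fin 2, pd i (pd j f) w
      = fderiv ℝ (fderiv ℝ f) w (Pi.single i 1) (Pi.single j 1) := by
    intro i j
    have : HasFDerivAt (pd j f) _ w := hd.hasFDerivAt.clm_apply (hasFDerivAt_const (Pi.single j 1) w)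
    simp [pd, this.fderiv] 
  rw [key, key]
  exact hs _ _

lemma aux_pd_congr {U : Set V2} (hU : IsOpen U) {f g : V2 → ℂ} (h : ∀ y ∈ U, f y = g y)
    {w : V2} (hw : w ∈ U) (k : Fin 2) : pd k f w = pd k g w := by
  have : f =ᶠ[nhds w] g := Filter.eventually_of_mem (hU.mem_nhds hw) h
  simp only [pd, this.fderiv_eq]

lemma aux_pd_lin (k : Fin 2) (a b : ℂ) {f g : V2 → ℂ} {w : V2}
    (hf : DifferentiableAt ℝ f w) (hg : DifferentiableAt ℝ g w) :
    pd k (fun y => a * f y + b * g y) w = a * pd k f w + b * pd k g w := by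
  have := (hf.hasFDerivAt.const_mul a).add (hg.hasFDerivAt.const_mul b)
  have h2 : fderiv ℝ (fun y => a * f y + b * g y) w = _ := this.fderiv
  simp [pd, h2]

lemma aux_E_apply (mu rho om : ℝ) (γs γp : V2 → ℂ) (y : V2) (i j : Fin 2) :
    Emat mu rho om γs γp y i j
      = ((mu : ℂ)⁻¹ * (1 : Matrix (Fin 2) (Fin 2) ℂ) i j) * γs y
        + (((rho * om ^ 2 : ℝ) : ℂ))⁻¹ * pd i (pd j (fun w => γs w - γp w)) y := by
  simp [Emat, hess]; ring

/-- Theorem A.3 (regularized representation of the elastic double-layer operator `K_s`,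
stated at points off the curve):
`∫₀^L (T_yẼ(z(s)))^T u(s) ds = ∫₀^L (−n(s)·(∇γ_s)(x−z(s))) u(s) ds
  − ∫₀^L (−(∇R)(x−z(s))) (n(s)·u(s)) ds
  + ∫₀^L (2μ E(x−z(s)) − γ_s(x−z(s)) I) A u'(s) ds`, componentwise. -/
theorem elastic_double_layer_regularization (lam mu rho om ks kp : ℝ)
    (hmu : 0 < mu) (hlm : 0 < lam + mu) (hrho : 0 < rho) (hom : 0 < om)
    (hks : ks = om * Real.sqrt (rho / mu)) (hkp : kp = om * Real.sqrt (rho / (lam + 2 * mu)))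
    (L : ℝ) (hL : 0 < L) (z : ℝ → V2) (hz : ContDiff ℝ 2 z)
    (hzper : Function.Periodic z L) (hzinj : Set.InjOn z (Set.Ico 0 L))
    (harc : ∀ s : ℝ, (deriv z s 0) ^ 2 + (deriv z s 1) ^ 2 = 1)
    (nn : ℝ → V2) (hnn : ∀ s : ℝ, deriv z s = Arot.mulVec (nn s))
    (U : Set V2) (hU : IsOpen U) (γs γp : V2 → ℂ)
    (hγs : ContDiffOn ℝ 3 γs U) (hγp : ContDiffOn ℝ 3 γp U)
    (hHs : ∀ y ∈ U, pd 0 (pd 0 γs) y + pd 1 (pd 1 γs) y + (ks : ℂ) ^ 2 * γs y = 0)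
    (hHp : ∀ y ∈ U, pd 0 (pd 0 γp) y + pd 1 (pd 1 γp) y + (kp : ℂ) ^ 2 * γp y = 0)
    (u : ℝ → C2) (hu : ContDiff ℝ 1 u) (huper : Function.Periodic u L)
    (x : V2) (hx : ∀ s : ℝ, x - z s ∈ U) :
    ∀ i : Fin 2,
      (∫ s in (0 : ℝ)..L, ∑ j : Fin 2,
          tracM lam mu (nn s) (fun y => Emat mu rho om γs γp (x - y)) (z s) j i * u s j)
        = (∫ s in (0 : ℝ)..L,
              (-((nn s 0 : ℂ) * pd 0 γs (x - z s) + (nn s 1 : ℂ) * pd 1 γs (x - z s))) * u s i)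
          - (∫ s in (0 : ℝ)..L,
              (-(pd i (fun w => γs w - γp w) (x - z s)))
                * ((nn s 0 : ℂ) * u s 0 + (nn s 1 : ℂ) * u s 1))
          + ∫ s in (0 : ℝ)..L, ∑ j : Fin 2,
              ((2 * (mu : ℂ)) • Emat mu rho om γs γp (x - z s)
                - γs (x - z s) • (1 : Matrix (Fin 2) (Fin 2) ℂ)) i j
                * ArotC.mulVec (deriv u s) j := by
  have hm0 : (mu : ℂ) ≠ 0 := by exact_mod_cast hmu.ne'
  have hlm0 : 0 < lam + 2 * mu := by linarith
  have hlmC : (lam : ℂ) + 2 * mu ≠ 0 := by exact_mod_cast hlm0.ne'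
  have hro : 0 < rho * om ^ 2 := by positivity
  have hks2 : (ks : ℂ) ^ 2 = (rho * om ^ 2 : ℝ) * (mu : ℂ)⁻¹ := by
    have : ks ^ 2 = rho * om ^ 2 * mu⁻¹ := by
      rw [hks, mul_pow, Real.sq_sqrt (by positivity)]; ring
    exact_mod_cast this
  have hkp2 : (kp : ℂ) ^ 2 = (rho * om ^ 2 : ℝ) * ((lam : ℂ) + 2 * mu)⁻¹ := by
    have : kp ^ 2 = rho * om ^ 2 * (lam + 2 * mu)⁻¹ := by
      rw [hkp, mul_pow, Real.sq_sqrt (by positivity)]; ring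
    exact_mod_cast this
  obtain ⟨c, hc⟩ : ∃ c : ℂ, c = (((rho * om ^ 2 : ℝ) : ℂ))⁻¹ := ⟨_, rfl⟩
  have hroC : (((rho * om ^ 2 : ℝ) : ℂ)) ≠ 0 := by exact_mod_cast hro.ne'
  have hcks : c * (ks : ℂ) ^ 2 = (mu : ℂ)⁻¹ := by
    rw [hks2, hc, inv_mul_cancel_left₀ hroC]
  have hckp : c * (kp : ℂ) ^ 2 = ((lam : ℂ) + 2 * mu)⁻¹ := by
    rw [hkp2, hc, inv_mul_cancel_left₀ hroC]
  obtain ⟨R, hR⟩ : ∃ R : V2 → ℂ, R = fun w => γs w - γp w := ⟨_, rfl⟩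
  have hRC : ContDiffOn ℝ 3 R U := by rw [hR]; exact hγs.sub hγp
  simp only [Matrix.sub_apply, Matrix.smul_apply, tracM, Matrix.of_apply, aux_E_apply, ← hR, ← hc,
    smul_eq_mul]
  -- regularity
  have hR1 : ∀ j, ContDiffOn ℝ 2 (pd j R) U := fun j =>
    aux_pd_contDiffOn hU hRC (by norm_num) j
  have hR2 : ∀ i j, ContDiffOn ℝ 1 (pd i (pd j R)) U := fun i j =>
    aux_pd_contDiffOn hU (hR1 j) (by norm_num) i
  have hR3 : ∀ k i j, ContDiffOn ℝ 0 (pd k (pd i (pd j R))) U := fun k i j =>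
    aux_pd_contDiffOn hU (hR2 i j) (by norm_num) k
  have hs1 : ∀ j, ContDiffOn ℝ 2 (pd j γs) U := fun j =>
    aux_pd_contDiffOn hU hγs (by norm_num) j
  have hdiff : ∀ {n : WithTop ℕ∞} {f : V2 → ℂ}, ContDiffOn ℝ n f U → n ≠ 0 → ∀ y ∈ U,
      DifferentiableAt ℝ f y := fun hf hn y hy =>
    (hf.contDiffAt (hU.mem_nhds hy)).differentiableAt hn
  have hγsd := hdiff hγs (by norm_num)
  have hγpd := hdiff hγp (by norm_num)
  have hR2d := fun i j => hdiff (hR2 i j) (by norm_num)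
  have hsub : ∀ {n : WithTop ℕ∞} (_ : n ≠ 0) {f g : V2 → ℂ}, ContDiffOn ℝ n f U →
      ContDiffOn ℝ n g U → ∀ k, ∀ y ∈ U, pd k (fun w => f w - g w) y = pd k f y - pd k g y := by
    intro n hn f g hf hg k y hy
    have := aux_pd_lin k 1 (-1) (hdiff hf hn y hy) (hdiff hg hn y hy)
    simpa [sub_eq_add_neg] using this
  have hRpd1 : ∀ k, ∀ y ∈ U, pd k R y = pd k γs y - pd k γp y := by
    rw [hR]; exact hsub (by norm_num) hγs hγp
  have hRpd2 : ∀ l k, ∀ y ∈ U, pd l (pd k R) y = pd l (pd k γs) y - pd l (pd k γp) y := by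
    intro l k y hy
    rw [aux_pd_congr hU (hRpd1 k) hy l]
    exact hsub (n := 2) (by norm_num) (hs1 k) (aux_pd_contDiffOn hU hγp (by norm_num) k) l y hy
  have hlap : ∀ k, ∀ y ∈ U, pd k (pd 0 (pd 0 R)) y + pd k (pd 1 (pd 1 R)) y
      = -(ks : ℂ) ^ 2 * pd k γs y + (kp : ℂ) ^ 2 * pd k γp y := by
    intro k y hy
    have h1 := aux_pd_lin k 1 1 (hR2d 0 0 y hy) (hR2d 1 1 y hy)
    have h2 := aux_pd_lin k (-(ks : ℂ) ^ 2) ((kp : ℂ) ^ 2) (hγsd y hy) (hγpd y hy)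
    rw [one_mul, one_mul] at h1
    rw [← h1, ← h2]
    refine aux_pd_congr hU ?_ hy k
    intro w hw
    rw [hRpd2 0 0 w hw, hRpd2 1 1 w hw]
    linear_combination hHs w hw - hHp w hw
  have hcomm1 : ∀ j, ∀ y ∈ U, pd 0 (pd 1 (pd j R)) y = pd 1 (pd 0 (pd j R)) y :=
    fun j y hy => aux_pd_comm hU (hR1 j) hy
  have hcomm2 : ∀ k, ∀ y ∈ U, pd k (pd 0 (pd 1 R)) y = pd k (pd 1 (pd 0 R)) y :=
    fun k y hy => aux_pd_congr hU
      (fun w hw => aux_pd_comm hU (hRC.of_le (by norm_num)) hw) hy k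
  -- derivative of the tensor
  have hEder : ∀ k (a b : ℂ) i j, ∀ s,
      pd k (fun y => a * γs (x - y) + b * pd i (pd j R) (x - y)) (z s)
        = -(a * pd k γs (x - z s) + b * pd k (pd i (pd j R)) (x - z s)) := by
    intro k a b i j s
    have hd1 := hγsd _ (hx s)
    have hd2 := hR2d i j _ (hx s)
    rw [← aux_pd_lin k a b hd1 hd2]
    exact aux_pd_comp_sub k (fun w => a * γs w + b * pd i (pd j R) w) x (z s)
      ((hd1.const_mul a).add (hd2.const_mul b))
  simp only [hEder]
  -- the curve
  have hzd : Differentiable ℝ z := hz.differentiable (by norm_num)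
  have hzc : Continuous (deriv z) := hz.continuous_deriv (by norm_num)
  have hn0 : ∀ s, nn s 0 = deriv z s 1 := fun s => by
    simp [hnn s, Arot, Matrix.mulVec, dotProduct, Fin.sum_univ_two]
  have hn1 : ∀ s, nn s 1 = - deriv z s 0 := fun s => by
    simp [hnn s, Arot, Matrix.mulVec, dotProduct, Fin.sum_univ_two]
  have hud : Differentiable ℝ u := hu.differentiable (by norm_num)
  have huc : Continuous (deriv u) := hu.continuous_deriv (by norm_num)
  have hud' : ∀ j s, HasDerivAt (fun s => u s j) (deriv u s j) s := fun j s =>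
    (hasDerivAt_pi.1 (hud s).hasDerivAt) j
  have hcu : ∀ j, Continuous fun s => u s j := fun j => (continuous_apply j).comp hu.continuous
  have hcu' : ∀ j, Continuous fun s => deriv u s j := fun j => (continuous_apply j).comp huc
  have hcz' : ∀ j, Continuous fun s => ((deriv z s j : ℝ) : ℂ) := fun j =>
    Complex.continuous_ofReal.comp ((continuous_apply j).comp hzc)
  have hcomp : ∀ {f : V2 → ℂ}, ContinuousOn f U → Continuous fun s => f (x - z s) :=
    fun hf => hf.comp_continuous (continuous_const.sub hz.continuous) hx
  have hcγ := hcomp hγs.continuousOn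
  have hcγ1 := fun k => hcomp (hs1 k).continuousOn
  have hcR1 := fun k => hcomp (hR1 k).continuousOn
  have hcR2 := fun k l => hcomp (hR2 k l).continuousOn
  have hcR3 := fun k l m => hcomp (hR3 k l m).continuousOn
  intro i
  obtain ⟨dl, hdl⟩ : ∃ dl : Fin 2 → Fin 2 → ℂ, dl = fun a b =>
    (1 : Matrix (Fin 2) (Fin 2) ℂ) a b := ⟨_, rfl⟩
  -- the total derivative
  let M : Fin 2 → ℝ → ℂ := fun j s =>
    2 * (mu : ℂ) * (((mu : ℂ)⁻¹ * dl i j) * γs (x - z s) + c * pd i (pd j R) (x - z s))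
      - γs (x - z s) * dl i j
  let dM : Fin 2 → ℝ → ℂ := fun j s =>
    2 * (mu : ℂ) * (((mu : ℂ)⁻¹ * dl i j) *
      (-((deriv z s 0 : ℂ) * pd 0 γs (x - z s) + (deriv z s 1 : ℂ) * pd 1 γs (x - z s)))
      + c * (-((deriv z s 0 : ℂ) * pd 0 (pd i (pd j R)) (x - z s)
        + (deriv z s 1 : ℂ) * pd 1 (pd i (pd j R)) (x - z s))))
      - (-((deriv z s 0 : ℂ) * pd 0 γs (x - z s) + (deriv z s 1 : ℂ) * pd 1 γs (x - z s))) * dl i j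
  have hM : ∀ j s, HasDerivAt (M j) (dM j s) s := by
    intro j s
    have h1 := aux_hasDerivAt γs x z s (hγsd _ (hx s)) (hzd s)
    have h2 := aux_hasDerivAt (pd i (pd j R)) x z s (hR2d i j _ (hx s)) (hzd s)
    exact (((h1.const_mul _).add (h2.const_mul _)).const_mul _).sub (h1.mul_const _)
  have hMc : ∀ j, Continuous (M j) := fun j => by
    exact continuous_iff_continuousAt.2 fun s => (hM j s).continuousAt
  have hdMc : ∀ j, Continuous (dM j) := fun j => by
    have h0 := hcR3 0 i j
    have h1 := hcR3 1 i j
    have h2 := hcγ1 0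
    have h3 := hcγ1 1
    have h4 := hcz' 0
    have h5 := hcz' 1
    simp only [dM]
    fun_prop
  let W : ℝ → ℂ := fun s => M 1 s * u s 0 - M 0 s * u s 1
  let dW : ℝ → ℂ := fun s => (dM 1 s * u s 0 + M 1 s * deriv u s 0)
    - (dM 0 s * u s 1 + M 0 s * deriv u s 1)
  have hW : ∀ s, HasDerivAt W (dW s) s := fun s =>
    ((hM 1 s).mul (hud' 0 s)).sub ((hM 0 s).mul (hud' 1 s))
  have hdWc : Continuous dW :=
    (((hdMc 1).mul (hcu 0)).add ((hMc 1).mul (hcu' 0))).sub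
      (((hdMc 0).mul (hcu 1)).add ((hMc 0).mul (hcu' 1)))
  have hWint : ∫ s in (0 : ℝ)..L, dW s = 0 := by
    rw [intervalIntegral.integral_eq_sub_of_hasDerivAt (fun s _ => hW s)
      (hdWc.intervalIntegrable _ _)]
    have h1 : z L = z 0 := by simpa using hzper 0
    have h2 : u L = u 0 := by simpa using huper 0
    simp only [W, M, h1, h2, sub_self]
  -- continuity of the right-hand integrands
  have hcn : ∀ k, Continuous fun s => ((nn s k : ℝ) : ℂ) := by
    intro k
    fin_cases k
    · simpa [hn0] using hcz' 1
    · have : Continuous fun s => -((deriv z s 0 : ℝ) : ℂ) := (hcz' 0).neg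
      simpa only [hn1, Complex.ofReal_neg, Fin.mk_one] using this
  have hcn0 := hcn 0
  have hcn1 := hcn 1
  have hcu0 := hcu 0
  have hcu1 := hcu 1
  have hg0 := hcγ1 0
  have hg1 := hcγ1 1
  have c1 : Continuous fun s => (-((nn s 0 : ℂ) * pd 0 γs (x - z s)
      + (nn s 1 : ℂ) * pd 1 γs (x - z s))) * u s i := by
    have := hcu i
    fun_prop
  have c2 : Continuous fun s => (-(pd i R (x - z s)))
                * ((nn s 0 : ℂ) * u s 0 + (nn s 1 : ℂ) * u s 1) := by
    have := hcR1 i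
    fun_prop
  have hAu : ∀ s, (∑ j : Fin 2, (2 * (mu : ℂ) * (((mu : ℂ)⁻¹ * (1 : Matrix (Fin 2) (Fin 2) ℂ) i j)
      * γs (x - z s) + c * pd i (pd j R) (x - z s))
      - γs (x - z s) * (1 : Matrix (Fin 2) (Fin 2) ℂ) i j) * ArotC.mulVec (deriv u s) j)
      = M 1 s * deriv u s 0 - M 0 s * deriv u s 1 := by
    intro s
    simp only [Fin.sum_univ_two, M, hdl]
    simp [ArotC, Matrix.mulVec, dotProduct, Fin.sum_univ_two]
    ring
  simp only [hAu]
  have c3 : Continuous fun s => M 1 s * deriv u s 0 - M 0 s * deriv u s 1 :=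
    ((hMc 1).mul (hcu' 0)).sub ((hMc 0).mul (hcu' 1))
  have I1 := c1.intervalIntegrable (μ := MeasureTheory.volume) 0 L
  have I2 := c2.intervalIntegrable (μ := MeasureTheory.volume) 0 L
  have I3 := c3.intervalIntegrable (μ := MeasureTheory.volume) 0 L
  have I4 := hdWc.intervalIntegrable (μ := MeasureTheory.volume) 0 L
  rw [← intervalIntegral.integral_sub I1 I2, ← intervalIntegral.integral_add (I1.sub I2) I3,
    ← sub_zero (∫ s in (0 : ℝ)..L, _ + _), ← hWint,
    ← intervalIntegral.integral_sub ((I1.sub I2).add I3) I4]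
  refine intervalIntegral.integral_congr fun s _ => ?_
  have hw := hx s
  have e1 := hlap 0 _ hw
  have e2 := hlap 1 _ hw
  have e3 := hcomm1 0 _ hw
  have e4 := hcomm1 1 _ hw
  have e5 := hcomm2 0 _ hw
  have e6 := hcomm2 1 _ hw
  have e7 := hRpd1 i _ hw
  have z0 : (deriv z s 0 : ℂ) = -(nn s 1 : ℂ) := by rw [hn1]; simp
  have z1 : (deriv z s 1 : ℂ) = (nn s 0 : ℂ) := by rw [hn0]
  simp only [dW, dM, M, hdl, Fin.sum_univ_two, e7, z0, z1]
  obtain ⟨p, hp⟩ : ∃ p : ℂ, p = (mu : ℂ)⁻¹ := ⟨_, rfl⟩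
  obtain ⟨q, hq⟩ : ∃ q : ℂ, q = ((lam : ℂ) + 2 * mu)⁻¹ := ⟨_, rfl⟩
  have hp1 : (mu : ℂ) * p = 1 := by rw [hp, mul_inv_cancel₀ hm0]
  have hq1 : ((lam : ℂ) + 2 * mu) * q = 1 := by rw [hq, mul_inv_cancel₀ hlmC]
  rw [← hp] at hcks
  rw [← hq] at hckp
  simp only [← hp]
  rw [e4, e6] at e1
  rw [e3] at e5
  rw [e6] at e4
  have f1 : c * (pd 0 (pd 0 (pd 0 R)) (x - z s) + pd 1 (pd 1 (pd 0 R)) (x - z s))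
      = -p * pd 0 γs (x - z s) + q * pd 0 γp (x - z s) := by
    rw [e1, ← hcks, ← hckp]; ring
  have f2 : c * (pd 1 (pd 0 (pd 0 R)) (x - z s) + pd 1 (pd 1 (pd 1 R)) (x - z s))
      = -p * pd 1 γs (x - z s) + q * pd 1 γp (x - z s) := by
    rw [e2, ← hcks, ← hckp]; ring
  have hi : i = 0 ∨ i = 1 := by fin_cases i <;> simp
  rcases hi with rfl | rfl
  · simp only [e3, e4, e5, e6, Matrix.one_apply_eq, ne_eq, zero_ne_one, one_ne_zero,
      not_false_eq_true, Matrix.one_apply_ne, Matrix.cons_val_zero, Matrix.cons_val_one,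
      Complex.ofReal_neg]
    linear_combination (-((lam : ℂ) + 2 * mu)) * (nn s 0 * u s 0 + nn s 1 * u s 1) * (f1)
      + (-2 * (nn s 0 * pd 0 γs (x - z s) + nn s 1 * pd 1 γs (x - z s)) * u s 0
        + pd 1 γs (x - z s) * (nn s 1 * u s 0 - nn s 0 * u s 1)
        - 2 * (nn s 1 * pd 0 γs (x - z s) - nn s 0 * pd 1 γs (x - z s)) * u s 1
        + 2 * pd 0 γs (x - z s) * (nn s 0 * u s 0 + nn s 1 * u s 1)) * hp1
      - pd 0 γp (x - z s) * (nn s 0 * u s 0 + nn s 1 * u s 1) * hq1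
  · simp only [e3, e4, e5, e6, Matrix.one_apply_eq, ne_eq, zero_ne_one, one_ne_zero,
      not_false_eq_true, Matrix.one_apply_ne, Matrix.cons_val_zero, Matrix.cons_val_one,
      Complex.ofReal_neg]
    linear_combination (-((lam : ℂ) + 2 * mu)) * (nn s 0 * u s 0 + nn s 1 * u s 1) * (f2)
      + (-2 * (nn s 0 * pd 0 γs (x - z s) + nn s 1 * pd 1 γs (x - z s)) * u s 1
        - pd 0 γs (x - z s) * (nn s 1 * u s 0 - nn s 0 * u s 1)
        + 2 * (nn s 1 * pd 0 γs (x - z s) - nn s 0 * pd 1 γs (x - z s)) * u s 0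
        + 2 * pd 1 γs (x - z s) * (nn s 0 * u s 0 + nn s 1 * u s 1)) * hp1
      - pd 1 γp (x - z s) * (nn s 0 * u s 0 + nn s 1 * u s 1) * hq1

end
end
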